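/- arXiv:2407.10429 — 2 statements merged into one kernel-verified Lean document; each statement's English description precedes it below -/
import Mathlib

section
/- Let E be a real inner product space and let x, y ∈ E satisfy ‖x‖ ≥ 1 and ‖y‖ ≥ 1. Then ‖ x/‖x‖ − y/‖y‖ ‖ ≤ ‖x − y‖. That is, the radial projection onto the unit sphere is nonexpansive on the complement of the open unit ball. -/
/-- The radial projection onto the unit sphere of a real inner product space is
nonexpansive on the complement of the open unit ball (pointwise core of Bartels'
energy-decrease theorem, Theorem A.4). -/
theorem radial_projection_nonexpansive
    {E : Type*} [NormedAddCommGroup E] [InnerProductSpace ℝ E]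
    (x y : E) (hx : 1 ≤ ‖x‖) (hy : 1 ≤ ‖y‖) :
    ‖‖x‖⁻¹ • x - ‖y‖⁻¹ • y‖ ≤ ‖x - y‖ := by
  have ha : 0 < ‖x‖ := by linarith
  have hb : 0 < ‖y‖ := by linarith
  have hu : ‖‖x‖⁻¹ • x‖ = 1 := by
    rw [norm_smul, norm_inv, norm_norm, inv_mul_cancel₀ ha.ne']
  have hv : ‖‖y‖⁻¹ • y‖ = 1 := by
    rw [norm_smul, norm_inv, norm_norm, inv_mul_cancel₀ hb.ne']
  have hc : inner ℝ (‖x‖⁻¹ • x) (‖y‖⁻¹ • y) ≤ 1 := by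
    have h := real_inner_le_norm (‖x‖⁻¹ • x) (‖y‖⁻¹ • y)
    rwa [hu, hv, one_mul] at h
  have hxy : inner ℝ x y = ‖x‖ * ‖y‖ * inner ℝ (‖x‖⁻¹ • x) (‖y‖⁻¹ • y) := by
    rw [real_inner_smul_left, real_inner_smul_right]
    field_simp
  refine (sq_le_sq₀ (norm_nonneg _) (norm_nonneg _)).1 ?_
  rw [norm_sub_sq_real, norm_sub_sq_real, hu, hv, hxy]
  have hab : 1 ≤ ‖x‖ * ‖y‖ := by nlinarith
  nlinarith [sq_nonneg (‖x‖ - ‖y‖), mul_nonneg (sub_nonneg.2 hab) (sub_nonneg.2 hc)]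
end

section
/- Let N ≥ 1 and let a : Fin N → Fin N → ℝ be a symmetric array (a i j = a j i) with a i j ≤ 0 whenever i ≠ j and with zero row sums, Σⱼ a i j = 0 for every i. Let u : Fin N → ℝ³ satisfy ‖u i‖ ≥ 1 for every i, and let û i = u i / ‖u i‖. Then Σᵢ Σⱼ a i j ⟨û i, û j⟩ ≤ Σᵢ Σⱼ a i j ⟨u i, u j⟩. (This is the discrete algebraic form of Theorem A.4: for a stiffness matrix a i j = ∫ ∇φᵢ · ∇φⱼ of piecewise linear hat functions satisfying the acuteness condition ∫ ∇φᵢ · ∇φⱼ ≤ 0 for i ≠ j, normalising the nodal values onto the unit sphere does not increase the Dirichlet energy.) -/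
open scoped RealInnerProductSpace

theorem energy_identity_aux {N : ℕ} (a : Fin N → Fin N → ℝ)
    (hsymm : ∀ i j, a i j = a j i) (hrow : ∀ i, ∑ j, a i j = 0)
    (v : Fin N → EuclideanSpace ℝ (Fin 3)) :
    ∑ i, ∑ j, a i j * ⟪v i, v j⟫ = ∑ i, ∑ j, (-(a i j) / 2) * ‖v i - v j‖ ^ 2 := by
  have h1 : ∑ i, ∑ j, a i j * ‖v i‖ ^ 2 = 0 := by
    refine Finset.sum_eq_zero fun i _ => ?_
    rw [← Finset.sum_mul, hrow, zero_mul]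
  have h2 : ∑ i, ∑ j, a i j * ‖v j‖ ^ 2 = 0 := by
    rw [Finset.sum_comm, ← h1]
    refine Finset.sum_congr rfl fun i _ => Finset.sum_congr rfl fun j _ => ?_
    rw [hsymm]
  have h3 : ∑ i, ∑ j, (-(a i j) / 2) * ‖v i - v j‖ ^ 2
      = ∑ i, ∑ j, a i j * ⟪v i, v j⟫ - (1 / 2) * ∑ i, ∑ j, a i j * ‖v i‖ ^ 2
        - (1 / 2) * ∑ i, ∑ j, a i j * ‖v j‖ ^ 2 := by
    simp only [Finset.mul_sum, ← Finset.sum_sub_distrib]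
    refine Finset.sum_congr rfl fun i _ => Finset.sum_congr rfl fun j _ => ?_
    rw [norm_sub_sq_real]
    ring
  rw [h3, h1, h2]
  ring

theorem normalise_dist_aux (x y : EuclideanSpace ℝ (Fin 3)) (hx : 1 ≤ ‖x‖) (hy : 1 ≤ ‖y‖) :
    ‖‖x‖⁻¹ • x - ‖y‖⁻¹ • y‖ ^ 2 ≤ ‖x - y‖ ^ 2 := by
  have hx0 : 0 < ‖x‖ := by linarith
  have hy0 : 0 < ‖y‖ := by linarith
  have n1 : ‖‖x‖⁻¹ • x‖ = 1 := by
    rw [norm_smul, norm_inv, norm_norm, inv_mul_cancel₀ hx0.ne']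
  have n2 : ‖‖y‖⁻¹ • y‖ = 1 := by
    rw [norm_smul, norm_inv, norm_norm, inv_mul_cancel₀ hy0.ne']
  have hc : ⟪‖x‖⁻¹ • x, ‖y‖⁻¹ • y⟫ ≤ 1 := by
    have := real_inner_le_norm (‖x‖⁻¹ • x) (‖y‖⁻¹ • y)
    rwa [n1, n2, one_mul] at this
  have hp : ⟪x, y⟫ = ‖x‖ * ‖y‖ * ⟪‖x‖⁻¹ • x, ‖y‖⁻¹ • y⟫ := by
    rw [real_inner_smul_left, real_inner_smul_right]
    field_simp
  rw [norm_sub_sq_real, norm_sub_sq_real, n1, n2, hp]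
  generalize ⟪‖x‖⁻¹ • x, ‖y‖⁻¹ • y⟫ = c at *
  have hrs : 0 ≤ ‖x‖ * ‖y‖ - 1 := by nlinarith
  nlinarith [mul_nonneg hrs (sub_nonneg.2 hc), sq_nonneg (‖x‖ - ‖y‖)]

/-- Discrete algebraic form of Theorem A.4: for a symmetric stiffness matrix with
nonpositive off-diagonal entries and zero row sums, normalising the nodal values onto
the unit sphere does not increase the Dirichlet energy. -/
theorem normalisation_decreases_discrete_energy
    (N : ℕ) (hN : 1 ≤ N) (a : Fin N → Fin N → ℝ)
    (hsymm : ∀ i j, a i j = a j i)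
    (hoff : ∀ i j, i ≠ j → a i j ≤ 0)
    (hrow : ∀ i, ∑ j, a i j = 0)
    (u : Fin N → EuclideanSpace ℝ (Fin 3))
    (hu : ∀ i, 1 ≤ ‖u i‖) :
    ∑ i, ∑ j, a i j * ⟪‖u i‖⁻¹ • u i, ‖u j‖⁻¹ • u j⟫ ≤
      ∑ i, ∑ j, a i j * ⟪u i, u j⟫ := by
  rw [energy_identity_aux a hsymm hrow u,
    energy_identity_aux a hsymm hrow (fun i => ‖u i‖⁻¹ • u i)]
  refine Finset.sum_le_sum fun i _ => Finset.sum_le_sum fun j _ => ?_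
  by_cases hij : i = j
  · subst hij
    simp
  · exact mul_le_mul_of_nonneg_left (normalise_dist_aux _ _ (hu i) (hu j))
      (by linarith [hoff i j hij])
end
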